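/- arXiv:1112.4346 — 2 statements merged into one kernel-verified Lean document; each statement's English description precedes it below -/
import Mathlib

section
/- Let α > 0 and let f be an α-separated trigonometric polynomial, f(x) = Σ_{n=1}^N c_n e^{iλ_n x}. Then for every x ∈ ℝ, ∫_x^{x+1} |f(s)|² ds ≤ (2π/α + 1) Σ_{n=1}^N |c_n|². -/
/-!
By the fundamental theorem of calculus the problem is Hilbert's inequality. If
`E s i = c i * exp (I * Λ i * s)` and `H` is the Hermitian matrix with entries `I / (Λ i - Λ j)` off
the diagonal, then `star (E s) ⬝ᵥ H *ᵥ E s` has derivative `‖∑ i, E s i‖ ^ 2 - ∑ i, ‖c i‖ ^ 2`, so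
that it suffices to bound this quadratic form by `π / δ * ∑ i, ‖c i‖ ^ 2` when the frequencies are
`δ`-spaced, that is, to bound the eigenvalues of `H` by `π / δ`.

Partial fractions write `H * H` as the sum of a commutator with `H`, whose quadratic form vanishes
on every eigenvector of `H`, and of a matrix whose rows have `ℓ¹` norm at most
`3 * ∑ j, (Λ i - Λ j)⁻¹ ^ 2`. Since the frequencies are spaced this is at most
`3 * 2 * ζ(2) / δ ^ 2 = (π / δ) ^ 2`, and Schur's test concludes.
-/

open Finset Complex
open scoped ComplexConjugate Matrix Real

/-- A family of reals is `δ`-well-spaced when members with distinct indices are at distance at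
least `δ`; in contrast to `Metric.IsSeparated`, distance exactly `δ` is allowed. -/
def WellSpaced {ι : Type*} (δ : ℝ) (x : ι → ℝ) : Prop :=
  Pairwise fun i j ↦ δ ≤ |x i - x j|

section WellSpaced

variable {ι : Type*} {δ : ℝ} {x : ι → ℝ}

lemma WellSpaced.injective (hx : WellSpaced δ x) (hδ : 0 < δ) : Function.Injective x := by
  intro i j hij
  by_contra hne
  have hgap : δ ≤ |x i - x j| := hx hne
  rw [hij, sub_self, abs_zero] at hgap
  exact hgap.not_gt hδ

lemma WellSpaced.sub_const (hx : WellSpaced δ x) (a : ℝ) : WellSpaced δ fun i ↦ x i - a := by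
  simpa only [WellSpaced, sub_sub_sub_cancel_right] using hx

lemma WellSpaced.neg (hx : WellSpaced δ x) : WellSpaced δ fun i ↦ -x i := by
  simpa only [WellSpaced, ← neg_sub', abs_neg] using hx

lemma wellSpaced_of_le_sub_succ {N : ℕ} {Λ : ℕ → ℝ} (hδ : 0 ≤ δ)
    (hΛ : ∀ n, n + 1 < N → δ ≤ Λ (n + 1) - Λ n) : WellSpaced δ fun i : Fin N ↦ Λ i := by
  have le_sub_of_lt (m n : ℕ) (hmn : m < n) (hn : n < N) : δ ≤ Λ n - Λ m := by
    induction n, hmn using Nat.le_induction with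
    | base => exact hΛ m hn
    | succ n _ ih => linarith [ih (by lia), hΛ n hn]
  intro i j hij
  rcases Fin.lt_or_lt_of_ne hij with hlt | hlt
  · rw [abs_sub_comm]
    exact (le_sub_of_lt i j hlt j.isLt).trans (le_abs_self _)
  · exact (le_sub_of_lt j i hlt i.isLt).trans (le_abs_self _)

lemma WellSpaced.sum_inv_sq_le_of_le (hx : WellSpaced δ x) (hδ : 0 < δ) {S : Finset ι}
    (hS : ∀ i ∈ S, δ ≤ x i) : ∑ i ∈ S, (x i)⁻¹ ^ 2 ≤ π ^ 2 / 6 / δ ^ 2 := by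
  -- Rounding `x i / δ` down gives distinct positive integers, whence the comparison with `ζ(2)`.
  let k (i : ι) : ℕ := ⌊x i / δ⌋₊
  have k_mul_le {i : ι} (hi : i ∈ S) : k i * δ ≤ x i :=
    (le_div_iff₀ hδ).1 (Nat.floor_le (div_nonneg (hδ.le.trans (hS i hi)) hδ.le))
  have k_pos {i : ι} (hi : i ∈ S) : 0 < k i := Nat.floor_pos.2 ((one_le_div hδ).2 (hS i hi))
  have lt_k_mul (i : ι) : x i < (k i + 1) * δ := (div_lt_iff₀ hδ).1 (Nat.lt_floor_add_one _)
  have k_injOn : Set.InjOn k S := by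
    intro i hi j hj hij
    by_contra hne
    have hlt_i := lt_k_mul i
    have hle_i := k_mul_le hi
    rw [hij] at hlt_i hle_i
    exact (hx hne).not_gt (abs_lt.2 ⟨by linarith [lt_k_mul j], by linarith [k_mul_le hj]⟩)
  calc ∑ i ∈ S, (x i)⁻¹ ^ 2
      ≤ ∑ i ∈ S, 1 / (k i : ℝ) ^ 2 / δ ^ 2 := by
        refine sum_le_sum fun i hi ↦ ?_
        have : 0 < (k i : ℝ) * δ := mul_pos (mod_cast k_pos hi) hδ
        rw [inv_pow, div_div, ← mul_pow, one_div]
        gcongr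
        exact k_mul_le hi
    _ = (∑ n ∈ S.image k, 1 / (n : ℝ) ^ 2) / δ ^ 2 := by rw [sum_image k_injOn, sum_div]
    _ ≤ π ^ 2 / 6 / δ ^ 2 := by
        gcongr
        exact sum_le_hasSum _ (fun n _ ↦ by positivity) hasSum_zeta_two

lemma WellSpaced.sum_inv_sub_sq_le [Fintype ι] (hx : WellSpaced δ x) (hδ : 0 < δ) (i : ι) :
    ∑ j, (x i - x j)⁻¹ ^ 2 ≤ π ^ 2 / 3 / δ ^ 2 := by
  classical
  have sum_right : ∑ j with x i < x j, (x j - x i)⁻¹ ^ 2 ≤ π ^ 2 / 6 / δ ^ 2 := by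
    refine (hx.sub_const (x i)).sum_inv_sq_le_of_le hδ fun j hj ↦ ?_
    have hij : x i < x j := (mem_filter.1 hj).2
    simpa only [abs_of_pos (sub_pos.2 hij)] using hx (ne_of_apply_ne x hij.ne')
  have sum_left : ∑ j with x j < x i, (x i - x j)⁻¹ ^ 2 ≤ π ^ 2 / 6 / δ ^ 2 := by
    simp only [← neg_sub (x _) (x i)]
    refine (hx.sub_const (x i)).neg.sum_inv_sq_le_of_le hδ fun j hj ↦ ?_
    have hji : x j < x i := (mem_filter.1 hj).2
    simpa only [neg_sub, abs_of_pos (sub_pos.2 hji)] using hx (ne_of_apply_ne x hji.ne')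
  have split (j : ι) : (x i - x j)⁻¹ ^ 2 =
      (if x i < x j then (x j - x i)⁻¹ ^ 2 else 0) +
        if x j < x i then (x i - x j)⁻¹ ^ 2 else 0 := by
    rcases lt_trichotomy (x i) (x j) with h | h | h
    · rw [if_pos h, if_neg h.not_gt, add_zero, ← neg_sub, inv_neg, neg_sq]
    · simp [h]
    · rw [if_neg h.not_gt, if_pos h, zero_add]
  rw [sum_congr rfl fun j _ ↦ split j, sum_add_distrib, ← sum_filter, ← sum_filter]
  calc _ ≤ π ^ 2 / 6 / δ ^ 2 + π ^ 2 / 6 / δ ^ 2 := add_le_add sum_right sum_left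
    _ = π ^ 2 / 3 / δ ^ 2 := by ring

end WellSpaced

section QuadraticForm

variable {𝕜 n : Type*} [RCLike 𝕜] [Fintype n]

lemma norm_inner_map_self_le_of_eigenvalue_le {E : Type*} [NormedAddCommGroup E]
    [InnerProductSpace 𝕜 E] [FiniteDimensional 𝕜 E] {T : E →ₗ[𝕜] E} (hT : T.IsSymmetric) {C : ℝ}
    (hC : ∀ μ : ℝ, Module.End.HasEigenvalue T (μ : 𝕜) → |μ| ≤ C) (u : E) :
    ‖inner 𝕜 u (T u)‖ ≤ C * ‖u‖ ^ 2 := by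
  let e := hT.eigenvectorBasis rfl
  let μ := hT.eigenvalues rfl
  have inner_T (i) : inner 𝕜 (e i) (T u) = μ i * inner 𝕜 (e i) u := by
    rw [← hT, hT.apply_eigenvectorBasis, inner_smul_left, RCLike.conj_ofReal]
  calc ‖inner 𝕜 u (T u)‖ = ‖∑ i, inner 𝕜 u (e i) * inner 𝕜 (e i) (T u)‖ := by
        rw [e.sum_inner_mul_inner]
    _ ≤ ∑ i, ‖inner 𝕜 u (e i) * inner 𝕜 (e i) (T u)‖ := norm_sum_le _ _
    _ = ∑ i, |μ i| * ‖inner 𝕜 (e i) u‖ ^ 2 := by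
        refine sum_congr rfl fun i _ ↦ ?_
        rw [inner_T, norm_mul, norm_mul, RCLike.norm_ofReal, norm_inner_symm u]
        ring
    _ ≤ ∑ i, C * ‖inner 𝕜 (e i) u‖ ^ 2 := by
        gcongr with i
        exact hC _ (hT.hasEigenvalue_eigenvalues rfl i)
    _ = C * ‖u‖ ^ 2 := by rw [← mul_sum, e.sum_sq_norm_inner_right]

lemma norm_star_dotProduct_mulVec_le_of_eigenvalue_le {A : Matrix n n 𝕜} (hA : A.IsHermitian)
    {C : ℝ} (hC : ∀ (μ : ℝ) (v : n → 𝕜), v ≠ 0 → A *ᵥ v = (μ : 𝕜) • v → |μ| ≤ C) (u : n → 𝕜) :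
    ‖star u ⬝ᵥ A *ᵥ u‖ ≤ C * ∑ i, ‖u i‖ ^ 2 := by
  classical
  have eigenvalue_le (μ : ℝ) (hμ : Module.End.HasEigenvalue A.toEuclideanLin (μ : 𝕜)) :
      |μ| ≤ C := by
    obtain ⟨v, hv⟩ := hμ.exists_hasEigenvector
    refine hC μ v.ofLp (fun h ↦ hv.2 (by ext i; exact congrFun h i)) ?_
    simpa using congrArg WithLp.ofLp hv.apply_eq_smul
  have inner_le := norm_inner_map_self_le_of_eigenvalue_le
    (Matrix.isSymmetric_toEuclideanLin_iff.2 hA) eigenvalue_le (WithLp.toLp 2 u)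
  rw [EuclideanSpace.norm_sq_eq, EuclideanSpace.inner_eq_star_dotProduct,
    dotProduct_comm] at inner_le
  simpa using inner_le

lemma star_dotProduct_commutator_mulVec_eq_zero {A : Matrix n n 𝕜} (hA : A.IsHermitian) {μ : ℝ}
    {v : n → 𝕜} (hv : A *ᵥ v = (μ : 𝕜) • v) (B : Matrix n n 𝕜) : star v ⬝ᵥ ⁅B, A⁆ *ᵥ v = 0 := by
  have hv_left : star v ᵥ* A = (μ : 𝕜) • star v := by
    rw [← hA.eq, ← Matrix.star_mulVec, hv, star_smul, RCLike.star_def, RCLike.conj_ofReal]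
  rw [Ring.lie_def, Matrix.sub_mulVec, ← Matrix.mulVec_mulVec, ← Matrix.mulVec_mulVec,
    dotProduct_sub, hv, Matrix.mulVec_smul, Matrix.dotProduct_mulVec, hv_left, smul_dotProduct,
    dotProduct_smul, sub_self]

/-- **Schur's test**. -/
lemma norm_star_dotProduct_mulVec_le_of_sum_norm_le {W : Matrix n n 𝕜}
    (hW : ∀ i j, ‖W i j‖ = ‖W j i‖) {C : ℝ} (hC : ∀ i, ∑ j, ‖W i j‖ ≤ C) (u : n → 𝕜) :
    ‖star u ⬝ᵥ W *ᵥ u‖ ≤ C * ∑ i, ‖u i‖ ^ 2 := by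
  have entry_le (i j : n) : ‖star (u i) * (W i j * u j)‖ ≤
      (‖W i j‖ * ‖u i‖ ^ 2 + ‖W j i‖ * ‖u j‖ ^ 2) / 2 := by
    rw [norm_mul, norm_mul, norm_star, ← hW i j]
    linarith [mul_le_mul_of_nonneg_left (two_mul_le_add_sq ‖u i‖ ‖u j‖) (norm_nonneg (W i j))]
  calc ‖star u ⬝ᵥ W *ᵥ u‖ = ‖∑ i, ∑ j, star (u i) * (W i j * u j)‖ := by
        simp only [dotProduct, Matrix.mulVec, mul_sum, Pi.star_apply]
    _ ≤ ∑ i, ∑ j, (‖W i j‖ * ‖u i‖ ^ 2 + ‖W j i‖ * ‖u j‖ ^ 2) / 2 :=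
        norm_sum_le_of_le _ fun i _ ↦ norm_sum_le_of_le _ fun j _ ↦ entry_le i j
    _ = ∑ i, (∑ j, ‖W i j‖) * ‖u i‖ ^ 2 := by
        simp only [← sum_div, sum_add_distrib, sum_mul]
        rw [sum_comm (f := fun i j ↦ ‖W j i‖ * ‖u j‖ ^ 2), add_self_div_two]
    _ ≤ C * ∑ i, ‖u i‖ ^ 2 := by
        rw [mul_sum]
        gcongr with i
        exact hC i

end QuadraticForm

section HilbertMatrix

/-- The matrix with entries `1 / (x i - x j)` off the diagonal; the convention `0⁻¹ = 0` makes its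
diagonal vanish. -/
def invSubMatrix {K ι : Type*} [Field K] (x : ι → K) : Matrix ι ι K :=
  Matrix.of fun i j ↦ (x i - x j)⁻¹

lemma invSubMatrix_apply_swap {K ι : Type*} [Field K] (x : ι → K) (i j : ι) :
    invSubMatrix x j i = -invSubMatrix x i j := by
  rw [invSubMatrix, Matrix.of_apply, Matrix.of_apply, ← inv_neg, neg_sub]

/-- What is left of the square of `invSubMatrix x` after the removal of a commutator; see
`invSubMatrix_mul_self`. -/
def invSubMatrixRemainder {K ι : Type*} [Field K] [Fintype ι] [DecidableEq ι] (x : ι → K) :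
    Matrix ι ι K :=
  (2 : K) • (invSubMatrix x ⊙ invSubMatrix x) +
    Matrix.diagonal fun i ↦ ∑ j, invSubMatrix x i j ^ 2

-- Partial fractions; the last three terms correct the degenerate cases, where `0⁻¹ = 0`.
lemma invSubMatrix_apply_mul_apply {K ι : Type*} [Field K] [DecidableEq ι] {x : ι → K}
    (hx : Function.Injective x) (i j k : ι) :
    invSubMatrix x i j * invSubMatrix x j k =
      invSubMatrix x i k * (invSubMatrix x i j - invSubMatrix x k j)
        - (if j = i then invSubMatrix x i k ^ 2 else 0)
        - (if j = k then invSubMatrix x i k ^ 2 else 0)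
        - (if i = k then invSubMatrix x i j ^ 2 else 0) := by
  simp only [invSubMatrix, Matrix.of_apply]
  by_cases hij : j = i <;> by_cases hjk : j = k <;> by_cases hik : i = k <;> grind [hx.ne]

lemma invSubMatrix_mul_self {K ι : Type*} [Field K] [Fintype ι] [DecidableEq ι] {x : ι → K}
    (hx : Function.Injective x) :
    invSubMatrix x * invSubMatrix x =
      ⁅Matrix.diagonal fun i ↦ ∑ j, invSubMatrix x i j, invSubMatrix x⁆
        - invSubMatrixRemainder x := by
  ext i k
  rw [Matrix.mul_apply, sum_congr rfl fun j _ ↦ invSubMatrix_apply_mul_apply hx i j k]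
  simp only [sum_sub_distrib, ← mul_sum, sum_ite_eq', mem_univ, if_true, sum_ite_irrel,
    sum_const_zero, Ring.lie_def, invSubMatrixRemainder, Matrix.sub_apply, Matrix.add_apply,
    Matrix.smul_apply, Matrix.hadamard_apply, Matrix.diagonal_mul, Matrix.mul_diagonal,
    Matrix.diagonal_apply, smul_eq_mul]
  ring

lemma norm_invSubMatrixRemainder_apply_swap {K ι : Type*} [NormedField K] [Fintype ι]
    [DecidableEq ι] (x : ι → K) (i j : ι) :
    ‖invSubMatrixRemainder x i j‖ = ‖invSubMatrixRemainder x j i‖ := by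
  rcases eq_or_ne i j with rfl | hij
  · rfl
  · simp [invSubMatrixRemainder, Matrix.diagonal_apply_ne _ hij,
      Matrix.diagonal_apply_ne _ hij.symm, invSubMatrix_apply_swap x i j]

lemma sum_norm_invSubMatrixRemainder_apply_le {K ι : Type*} [NormedField K] [Fintype ι]
    [DecidableEq ι] (x : ι → K) (i : ι) :
    ∑ j, ‖invSubMatrixRemainder x i j‖ ≤ 3 * ∑ j, ‖x i - x j‖⁻¹ ^ 2 := by
  have norm_sq_apply (j : ι) : ‖invSubMatrix x i j ^ 2‖ = ‖x i - x j‖⁻¹ ^ 2 := by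
    rw [invSubMatrix, Matrix.of_apply, norm_pow, norm_inv]
  have entry_le (j : ι) : ‖invSubMatrixRemainder x i j‖ ≤
      2 * ‖x i - x j‖⁻¹ ^ 2 + if i = j then ∑ k, ‖x i - x k‖⁻¹ ^ 2 else 0 := by
    simp only [← norm_sq_apply]
    refine (norm_add_le _ _).trans (add_le_add ?_ ?_)
    · rw [Matrix.smul_apply, Matrix.hadamard_apply, smul_eq_mul, ← sq, two_mul, two_mul]
      exact norm_add_le _ _
    · rw [Matrix.diagonal_apply]
      split_ifs
      · exact norm_sum_le _ _
      · exact norm_zero.le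
  calc ∑ j, ‖invSubMatrixRemainder x i j‖
      ≤ ∑ j, (2 * ‖x i - x j‖⁻¹ ^ 2 + if i = j then ∑ k, ‖x i - x k‖⁻¹ ^ 2 else 0) :=
        sum_le_sum fun j _ ↦ entry_le j
    _ = 3 * ∑ j, ‖x i - x j‖⁻¹ ^ 2 := by
        rw [sum_add_distrib, ← mul_sum, sum_ite_eq, if_pos (mem_univ i)]
        ring

/-- The matrix of Hilbert's inequality, with a factor `i` that makes it self-adjoint. -/
noncomputable def hilbertMatrix {ι : Type*} (x : ι → ℝ) : Matrix ι ι ℂ :=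
  I • invSubMatrix fun i ↦ (x i : ℂ)

lemma hilbertMatrix_apply {ι : Type*} (x : ι → ℝ) (i j : ι) :
    hilbertMatrix x i j = I * (x i - x j : ℂ)⁻¹ := rfl

lemma isHermitian_hilbertMatrix {ι : Type*} (x : ι → ℝ) : (hilbertMatrix x).IsHermitian := by
  ext i j
  simp only [Matrix.conjTranspose_apply, hilbertMatrix_apply, star_mul', star_inv₀, star_sub,
    star_def, conj_I, conj_ofReal]
  rw [← neg_sub (x i : ℂ), inv_neg, neg_mul_neg]

variable {ι : Type*} [Fintype ι] {x : ι → ℝ} {δ : ℝ}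

lemma hilbertMatrix_mul_self [DecidableEq ι] (hx : Function.Injective x) :
    hilbertMatrix x * hilbertMatrix x =
      ⁅I • Matrix.diagonal fun i ↦ ∑ j, invSubMatrix (fun k ↦ (x k : ℂ)) i j, hilbertMatrix x⁆
        + invSubMatrixRemainder fun i ↦ (x i : ℂ) := by
  have hx_ofReal : Function.Injective fun i ↦ (x i : ℂ) := ofReal_injective.comp hx
  rw [hilbertMatrix, smul_mul_smul_comm, invSubMatrix_mul_self hx_ofReal, Ring.lie_def,
    Ring.lie_def, smul_mul_smul_comm, smul_mul_smul_comm, I_mul_I]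
  module

lemma abs_le_of_hilbertMatrix_mulVec_eq_smul (hx : WellSpaced δ x) (hδ : 0 < δ) {μ : ℝ}
    {v : ι → ℂ} (hv : v ≠ 0) (hμ : hilbertMatrix x *ᵥ v = (μ : ℂ) • v) : |μ| ≤ π / δ := by
  classical
  have row_le (i : ι) : ∑ j, ‖invSubMatrixRemainder (fun k ↦ (x k : ℂ)) i j‖ ≤ (π / δ) ^ 2 :=
    calc ∑ j, ‖invSubMatrixRemainder (fun k ↦ (x k : ℂ)) i j‖
        ≤ 3 * ∑ j, ‖(x i - x j : ℂ)‖⁻¹ ^ 2 :=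
          sum_norm_invSubMatrixRemainder_apply_le (fun k ↦ (x k : ℂ)) i
      _ = 3 * ∑ j, (x i - x j)⁻¹ ^ 2 := by
        simp only [← ofReal_sub, norm_real, Real.norm_eq_abs, inv_pow, sq_abs]
      _ ≤ 3 * (π ^ 2 / 3 / δ ^ 2) := by gcongr; exact hx.sum_inv_sub_sq_le hδ i
      _ = (π / δ) ^ 2 := by ring
  have norm_sq_pos : 0 < ∑ i, ‖v i‖ ^ 2 := by
    obtain ⟨i, hi⟩ := Function.ne_iff.1 hv
    exact sum_pos' (fun _ _ ↦ sq_nonneg _) ⟨i, mem_univ i, pow_pos (norm_pos_iff.2 hi) 2⟩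
  have norm_sq_eq : star v ⬝ᵥ v = ((∑ i, ‖v i‖ ^ 2 : ℝ) : ℂ) := by
    simp [dotProduct, conj_mul']
  have sq_form : star v ⬝ᵥ (hilbertMatrix x * hilbertMatrix x) *ᵥ v =
      ((μ ^ 2 * ∑ i, ‖v i‖ ^ 2 : ℝ) : ℂ) := by
    rw [← Matrix.mulVec_mulVec, hμ, Matrix.mulVec_smul, hμ, smul_smul, dotProduct_smul, norm_sq_eq,
      smul_eq_mul, ← sq, ← ofReal_pow, ← ofReal_mul]
  have remainder_form : star v ⬝ᵥ invSubMatrixRemainder (fun i ↦ (x i : ℂ)) *ᵥ v =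
      ((μ ^ 2 * ∑ i, ‖v i‖ ^ 2 : ℝ) : ℂ) := by
    rw [← sq_form, hilbertMatrix_mul_self (hx.injective hδ), Matrix.add_mulVec, dotProduct_add,
      star_dotProduct_commutator_mulVec_eq_zero (isHermitian_hilbertMatrix x) hμ, zero_add]
  have schur := norm_star_dotProduct_mulVec_le_of_sum_norm_le
    (norm_invSubMatrixRemainder_apply_swap _) row_le v
  rw [remainder_form, norm_real, Real.norm_of_nonneg (by positivity)] at schur
  exact abs_le_of_sq_le_sq (le_of_mul_le_mul_right schur norm_sq_pos) (by positivity)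

/-- **Hilbert's inequality** in the form of Montgomery and Vaughan. -/
theorem norm_star_dotProduct_hilbertMatrix_mulVec_le (hx : WellSpaced δ x) (hδ : 0 < δ)
    (u : ι → ℂ) : ‖star u ⬝ᵥ hilbertMatrix x *ᵥ u‖ ≤ π / δ * ∑ i, ‖u i‖ ^ 2 :=
  norm_star_dotProduct_mulVec_le_of_eigenvalue_le (isHermitian_hilbertMatrix x)
    (fun _ _ hv hμ ↦ abs_le_of_hilbertMatrix_mulVec_eq_smul hx hδ hv hμ) u

lemma hasDerivAt_star_dotProduct_hilbertMatrix_mulVec (hx : Function.Injective x)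
    {E : ℝ → ι → ℂ} {t : ℝ} (hE : ∀ i, HasDerivAt (E · i) (I * x i * E t i) t) :
    HasDerivAt (fun s ↦ star (E s) ⬝ᵥ hilbertMatrix x *ᵥ E s)
      ((‖∑ i, E t i‖ ^ 2 - ∑ i, ‖E t i‖ ^ 2 : ℝ) : ℂ) t := by
  classical
  have hasDerivAt_entry (i j : ι) :
      HasDerivAt (fun s ↦ star (E s i) * (hilbertMatrix x i j * E s j))
        (star (E t i) * E t j - if i = j then star (E t i) * E t j else 0) t := by
    convert! (hE i).star.mul ((hE j).const_mul (hilbertMatrix x i j)) using 1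
    simp only [hilbertMatrix_apply, star_mul', star_def, conj_I, conj_ofReal]
    split_ifs with hij
    · subst hij
      simp
    · have hsub : (x i - x j : ℂ) ≠ 0 := by
        rw [← ofReal_sub, ofReal_ne_zero, sub_ne_zero]
        exact hx.ne hij
      linear_combination (conj (E t i) * E t j) *
        ((x i - x j : ℂ) * (x i - x j : ℂ)⁻¹ * I_sq - mul_inv_cancel₀ hsub)
  have hasDerivAt_sum := HasDerivAt.fun_sum fun i (_ : i ∈ univ) ↦
    HasDerivAt.fun_sum fun j (_ : j ∈ univ) ↦ hasDerivAt_entry i j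
  convert! hasDerivAt_sum using 1
  · simp only [dotProduct, Matrix.mulVec, mul_sum, Pi.star_apply]
  · simp only [sum_sub_distrib, sum_ite_eq, mem_univ, if_true, ← sum_mul_sum, star_def, ← map_sum,
      conj_mul', ofReal_sub, ofReal_sum, ofReal_pow]

end HilbertMatrix

theorem stmt_2_general {ι : Type*} [Fintype ι] {δ : ℝ} (hδ : 0 < δ) (c : ι → ℂ) {Λ : ι → ℝ}
    (hΛ : WellSpaced δ Λ) (a b : ℝ) :
    |(∫ s in a..b, ‖∑ i, c i * exp (I * (Λ i : ℂ) * (s : ℂ))‖ ^ 2) - (b - a) * ∑ i, ‖c i‖ ^ 2|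
      ≤ 2 * π / δ * ∑ i, ‖c i‖ ^ 2 := by
  let E (s : ℝ) (i : ι) : ℂ := c i * exp (I * Λ i * s)
  let Φ (s : ℝ) : ℂ := star (E s) ⬝ᵥ hilbertMatrix Λ *ᵥ E s
  have norm_E (s : ℝ) (i : ι) : ‖E s i‖ = ‖c i‖ := by
    simp [E, norm_exp]
  have hasDerivAt_E (s : ℝ) (i : ι) : HasDerivAt (E · i) (I * Λ i * E s i) s := by
    have hasDerivAt_phase : HasDerivAt (fun z : ℂ ↦ I * Λ i * z) (I * Λ i) (s : ℂ) := by
      simpa using (hasDerivAt_id (s : ℂ)).const_mul (I * Λ i : ℂ)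
    convert! (hasDerivAt_phase.cexp.const_mul (c i)).comp_ofReal using 1
    ring
  have hasDerivAt_Φ (s : ℝ) :
      HasDerivAt Φ ((‖∑ i, E s i‖ ^ 2 - ∑ i, ‖c i‖ ^ 2 : ℝ) : ℂ) s := by
    simpa only [norm_E] using
      hasDerivAt_star_dotProduct_hilbertMatrix_mulVec (hΛ.injective hδ) (hasDerivAt_E s)
  have norm_Φ_le (s : ℝ) : ‖Φ s‖ ≤ π / δ * ∑ i, ‖c i‖ ^ 2 := by
    simpa only [norm_E] using norm_star_dotProduct_hilbertMatrix_mulVec_le hΛ hδ (E s)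
  have continuous_sum : Continuous fun s ↦ ‖∑ i, E s i‖ ^ 2 := by fun_prop
  have integral_eq :
      (((∫ s in a..b, ‖∑ i, E s i‖ ^ 2) - (b - a) * ∑ i, ‖c i‖ ^ 2 : ℝ) : ℂ) = Φ b - Φ a := by
    rw [← intervalIntegral.integral_eq_sub_of_hasDerivAt (fun s _ ↦ hasDerivAt_Φ s)
      (Continuous.intervalIntegrable (by fun_prop) a b), intervalIntegral.integral_ofReal,
      intervalIntegral.integral_sub (continuous_sum.intervalIntegrable a b) (by simp),
      intervalIntegral.integral_const, smul_eq_mul]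
  calc |(∫ s in a..b, ‖∑ i, E s i‖ ^ 2) - (b - a) * ∑ i, ‖c i‖ ^ 2| = ‖Φ b - Φ a‖ := by
        rw [← integral_eq, norm_real, Real.norm_eq_abs]
    _ ≤ ‖Φ b‖ + ‖Φ a‖ := norm_sub_le _ _
    _ ≤ π / δ * ∑ i, ‖c i‖ ^ 2 + π / δ * ∑ i, ‖c i‖ ^ 2 := add_le_add (norm_Φ_le b) (norm_Φ_le a)
    _ = 2 * π / δ * ∑ i, ‖c i‖ ^ 2 := by ring

/-- For an `α`-separated trigonometric polynomial `f(x) = Σ_{n<N} c_n e^{iλ_n x}`, for every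
`x ∈ ℝ`, `∫_x^{x+1} |f(s)|² ds ≤ (2π/α + 1) Σ_n |c_n|²`. -/
theorem stmt_2 (α : ℝ) (hα : 0 < α) (N : ℕ) (c : ℕ → ℂ) (Λ : ℕ → ℝ)
    (hsep : ∀ n, n + 1 < N → α < Λ (n + 1) - Λ n) (x : ℝ) :
    (∫ s in x..(x + 1),
        ‖∑ n ∈ Finset.range N, c n * Complex.exp (Complex.I * (Λ n : ℂ) * (s : ℂ))‖ ^ 2)
      ≤ (2 * Real.pi / α + 1) * ∑ n ∈ Finset.range N, ‖c n‖ ^ 2 := by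
  simp only [Finset.sum_range]
  linarith [(abs_le.1 (stmt_2_general hα (fun i : Fin N ↦ c i)
    (wellSpaced_of_le_sub_succ hα.le fun n hn ↦ (hsep n hn).le) x (x + 1))).2]
end

section
/- Fix a sign choice ±. For every k ∈ ℕ (k ≥ 1) and every α > 0, there exists a constant C = C(k, α) > 0 such that for every finite family f_1, ..., f_M of trigonometric polynomials, each of which is α-separated, ‖(Σ_{m=1}^M |H_± f_m|²)^{1/2}‖_{S^{2^k}} ≤ C ‖(Σ_{m=1}^M |f_m|²)^{1/2}‖_{S^{2^k}}. -/
/-- A trigonometric polynomial `x ↦ Σ_{n<N} c_n e^{iλ_n x}` with strictly increasing real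
exponents. -/
structure TrigPoly where
  N : ℕ
  c : ℕ → ℂ
  Λ : ℕ → ℝ
  mono : ∀ n, n + 1 < N → Λ n < Λ (n + 1)

/-- Evaluation of a trigonometric polynomial. -/
noncomputable def TrigPoly.eval (P : TrigPoly) (x : ℝ) : ℂ :=
  ∑ n ∈ Finset.range P.N, P.c n * Complex.exp (Complex.I * (P.Λ n : ℂ) * (x : ℂ))

/-- `α`-separation of the exponents: `λ_{n+1} - λ_n > α`. -/
def TrigPoly.sep (P : TrigPoly) (α : ℝ) : Prop :=
  ∀ n, n + 1 < P.N → α < P.Λ (n + 1) - P.Λ n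

/-- `sgnPM true` is `sgn₊` (value `1` at `0`); `sgnPM false` is `sgn₋` (value `-1` at `0`). -/
noncomputable def sgnPM (pos : Bool) (x : ℝ) : ℝ :=
  if pos then (if 0 ≤ x then 1 else -1) else (if 0 < x then 1 else -1)

/-- The modified Hilbert transform `H_± f(x) = Σ_n (-i sgn_±(λ_n)) c_n e^{iλ_n x}`. -/
noncomputable def TrigPoly.hilb (pos : Bool) (P : TrigPoly) (x : ℝ) : ℂ :=
  ∑ n ∈ Finset.range P.N,
    (-Complex.I * (sgnPM pos (P.Λ n) : ℂ)) * P.c n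
      * Complex.exp (Complex.I * (P.Λ n : ℂ) * (x : ℂ))

/-- The Stepanov norm `‖f‖_{S^p} = (sup_{x ∈ ℝ} ∫_x^{x+1} |f(s)|^p ds)^{1/p}` of a function
`f : ℝ → ℝ`. -/
noncomputable def stepanovNorm (p : ℝ) (f : ℝ → ℝ) : ℝ :=
  (⨆ x : ℝ, ∫ s in x..(x + 1), |f s| ^ p) ^ (1 / p)

/-!
The proof is a vector-valued version of Cotlar's argument. Write `f_m = p_m + q_m`, where `p_m`
collects the frequencies with `sgn_± = 1` and `q_m` the others, so that `H f_m = -i (p_m - q_m)`.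
By separation every frequency of `⟪q, p⟫ = Σ_m p_m conj(q_m)` is at least `α`, hence so is
every frequency of its `n`-th power, which therefore integrates to zero against each finite measure
whose characteristic function vanishes on `[α, ∞)`. Integrating the pointwise inequality
`‖p - q‖ ^ (2n) ≤ C ‖p + q‖ ^ (2n) + 2 Re ((-4 ⟪q, p⟫) ^ n)`, valid in every inner product space,
bounds `∫ (Σ |H f_m|²) ^ n` by `C ∫ (Σ |f_m|²) ^ n` for such a measure. Translates of the Fejér
weight `(1 - cos (b x)) / x²` with `b ≤ α` are of this kind; they are bounded below on unit
intervals and decay like `(1 + x²)⁻¹`, so this weighted estimate gives the uniform local one.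
-/

open MeasureTheory BoundedContinuousFunction
open scoped InnerProductSpace

section Cotlar

variable (𝕜 : Type*) [RCLike 𝕜]

lemma exists_pow_le_two_mul_re_pow (n : ℕ) :
    ∃ ε : ℝ, 0 < ε ∧ ∀ (r : ℝ) (u : 𝕜), 0 ≤ r → ‖u - (r : 𝕜)‖ ≤ ε * r →
      r ^ n ≤ 2 * RCLike.re (u ^ n) := by
  have hcont : ContinuousAt (fun w : 𝕜 => RCLike.re (w ^ n)) 1 := by fun_prop
  have hnear : ∀ᶠ w in nhds (1 : 𝕜), 1 / 2 < RCLike.re (w ^ n) :=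
    hcont.eventually_const_lt (by norm_num)
  obtain ⟨ε, hε, hball⟩ := Metric.nhds_basis_closedBall.eventually_iff.1 hnear
  refine ⟨ε, hε, fun r u hr hu => ?_⟩
  rcases hr.eq_or_lt with rfl | hr
  · have hu0 : u = 0 := by simpa using hu
    rcases n.eq_zero_or_pos with rfl | hn
    · simp
    · simp [hu0, hn.ne']
  have hr' : (r : 𝕜) ≠ 0 := by exact_mod_cast hr.ne'
  have hw : u / r ∈ Metric.closedBall (1 : 𝕜) ε := by
    rw [mem_closedBall_iff_norm, div_sub_one hr', norm_div, RCLike.norm_of_nonneg hr.le,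
      div_le_iff₀ hr]
    exact hu
  have hre : RCLike.re (u ^ n) = r ^ n * RCLike.re ((u / r) ^ n) := by
    rw [← RCLike.re_ofReal_mul, RCLike.ofReal_pow, ← mul_pow, mul_div_cancel₀ _ hr']
  have := mul_le_mul_of_nonneg_left (hball hw).le (pow_pos hr n).le
  linarith

variable {𝕜} in
lemma sq_pow_le_mul_sq_pow_add_re_pow {a c M : ℝ} {u : 𝕜} (n : ℕ) (ha : 0 ≤ a) (hc : 0 ≤ c)
    (hca : c ≤ M * a) (hu : ‖u - ((c ^ 2 : ℝ) : 𝕜)‖ ≤ a ^ 2 + 2 * (a * c)) :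
    (c ^ 2) ^ n ≤ 3 * ((1 + M) ^ 2) ^ n * (a ^ 2) ^ n + 2 * RCLike.re (u ^ n) := by
  have hu' : ‖u‖ ≤ (a + c) ^ 2 := by
    have := norm_le_norm_sub_add u ((c ^ 2 : ℝ) : 𝕜)
    rw [RCLike.norm_of_nonneg (sq_nonneg c)] at this
    linarith
  have hre : -RCLike.re (u ^ n) ≤ ((a + c) ^ 2) ^ n :=
    calc -RCLike.re (u ^ n) ≤ ‖u ^ n‖ := (neg_le_abs _).trans (RCLike.abs_re_le_norm _)
      _ = ‖u‖ ^ n := norm_pow u n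
      _ ≤ ((a + c) ^ 2) ^ n := by gcongr
  have hcn : (c ^ 2) ^ n ≤ ((a + c) ^ 2) ^ n := by
    gcongr
    linarith
  have hsum : ((a + c) ^ 2) ^ n ≤ ((1 + M) ^ 2) ^ n * (a ^ 2) ^ n := by
    rw [← mul_pow, ← mul_pow]
    gcongr
    linarith
  linarith

lemma exists_sq_pow_le_mul_sq_pow_add_re_pow (n : ℕ) :
    ∃ C : ℝ, 0 < C ∧ ∀ (a c : ℝ) (u : 𝕜), 0 ≤ a → 0 ≤ c →
      ‖u - ((c ^ 2 : ℝ) : 𝕜)‖ ≤ a ^ 2 + 2 * (a * c) →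
      (c ^ 2) ^ n ≤ C * (a ^ 2) ^ n + 2 * RCLike.re (u ^ n) := by
  obtain ⟨ε, hε, hperturb⟩ := exists_pow_le_two_mul_re_pow 𝕜 n
  obtain ⟨δ, hδ, hδ1, hδε⟩ : ∃ δ : ℝ, 0 < δ ∧ δ ≤ 1 ∧ 3 * δ ≤ ε :=
    ⟨min 1 (ε / 3), by positivity, min_le_left _ _, by linarith [min_le_right 1 (ε / 3)]⟩
  refine ⟨3 * ((1 + δ⁻¹) ^ 2) ^ n, by positivity, fun a c u ha hc hu => ?_⟩
  -- For `a ≤ δ c`, `u` is so close to `c²` that `u ^ n` dominates; otherwise `a` controls `c`.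
  rcases le_total a (δ * c) with hac | hca
  · have hclose : ‖u - ((c ^ 2 : ℝ) : 𝕜)‖ ≤ ε * c ^ 2 :=
      calc _ ≤ a * a + 2 * (a * c) := by rwa [← sq]
        _ ≤ δ * c * c + 2 * (δ * c * c) := by
          have : a ≤ c := hac.trans (mul_le_of_le_one_left hc hδ1)
          gcongr
        _ = 3 * δ * c ^ 2 := by ring
        _ ≤ ε * c ^ 2 := by gcongr
    have := hperturb _ u (sq_nonneg c) hclose
    have : 0 ≤ 3 * ((1 + δ⁻¹) ^ 2) ^ n * (a ^ 2) ^ n := by positivity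
    linarith
  · exact sq_pow_le_mul_sq_pow_add_re_pow n ha hc (by rwa [inv_mul_eq_div, le_div_iff₀' hδ]) hu

lemma norm_inner_sub_add_sub_norm_sq_le {E : Type*} [NormedAddCommGroup E]
    [InnerProductSpace 𝕜 E] (f g : E) :
    ‖⟪g - f, g + f⟫_𝕜 - ((‖g‖ ^ 2 : ℝ) : 𝕜)‖ ≤ ‖f‖ ^ 2 + 2 * (‖f‖ * ‖g‖) := by
  have hexpand : ⟪g - f, g + f⟫_𝕜 - ((‖g‖ ^ 2 : ℝ) : 𝕜) = ⟪g, f⟫_𝕜 - ⟪f, g⟫_𝕜 - ⟪f, f⟫_𝕜 := by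
    rw [inner_sub_left, inner_add_right, inner_add_right, inner_self_eq_norm_sq_to_K g]
    push_cast
    ring
  calc _ ≤ ‖⟪g, f⟫_𝕜‖ + ‖⟪f, g⟫_𝕜‖ + ‖⟪f, f⟫_𝕜‖ := by
        rw [hexpand]
        exact (norm_sub_le _ _).trans (add_le_add_left (norm_sub_le _ _) _)
    _ ≤ ‖g‖ * ‖f‖ + ‖f‖ * ‖g‖ + ‖f‖ * ‖f‖ := by
        gcongr <;> exact norm_inner_le_norm _ _
    _ = ‖f‖ ^ 2 + 2 * (‖f‖ * ‖g‖) := by ring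

lemma exists_integral_norm_sub_pow_le (n : ℕ) :
    ∃ C : ℝ, 0 < C ∧ ∀ {X E : Type*} [MeasurableSpace X] [NormedAddCommGroup E]
      [InnerProductSpace 𝕜 E] {μ : Measure X} {p q : X → E},
      Integrable (fun x => (‖p x + q x‖ ^ 2) ^ n) μ → Integrable (fun x => ⟪q x, p x⟫_𝕜 ^ n) μ →
      ∫ x, ⟪q x, p x⟫_𝕜 ^ n ∂μ = 0 →
      ∫ x, (‖p x - q x‖ ^ 2) ^ n ∂μ ≤ C * ∫ x, (‖p x + q x‖ ^ 2) ^ n ∂μ := by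
  obtain ⟨C, hC, hpointwise⟩ := exists_sq_pow_le_mul_sq_pow_add_re_pow 𝕜 n
  refine ⟨C, hC, fun {X E} _ _ _ {μ p q} hadd hinner hzero => ?_⟩
  have hinner' : Integrable (fun x => (-4 : 𝕜) ^ n * ⟪q x, p x⟫_𝕜 ^ n) μ := hinner.const_mul _
  have hre_zero : ∫ x, RCLike.re ((-4 : 𝕜) ^ n * ⟪q x, p x⟫_𝕜 ^ n) ∂μ = 0 := by
    rw [integral_re hinner', integral_const_mul, hzero, mul_zero, map_zero]
  have hle (x : X) : (‖p x - q x‖ ^ 2) ^ n ≤ C * (‖p x + q x‖ ^ 2) ^ n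
      + 2 * RCLike.re ((-4 : 𝕜) ^ n * ⟪q x, p x⟫_𝕜 ^ n) := by
    have hinner_eq : ⟪p x - q x - (p x + q x), p x - q x + (p x + q x)⟫_𝕜
        = -4 * ⟪q x, p x⟫_𝕜 := by
      rw [show p x - q x - (p x + q x) = -(q x + q x) by abel,
        show p x - q x + (p x + q x) = p x + p x by abel, inner_neg_left, inner_add_left,
        inner_add_right]
      ring
    rw [← mul_pow, ← hinner_eq]
    exact hpointwise _ _ _ (norm_nonneg _) (norm_nonneg _)
      (norm_inner_sub_add_sub_norm_sq_le 𝕜 _ _)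
  calc ∫ x, (‖p x - q x‖ ^ 2) ^ n ∂μ
      ≤ ∫ x, C * (‖p x + q x‖ ^ 2) ^ n
          + 2 * RCLike.re ((-4 : 𝕜) ^ n * ⟪q x, p x⟫_𝕜 ^ n) ∂μ :=
        integral_mono_of_nonneg (.of_forall fun x => by positivity)
          ((hadd.const_mul C).add (hinner'.re.const_mul 2)) (.of_forall hle)
    _ = C * ∫ x, (‖p x + q x‖ ^ 2) ^ n ∂μ := by
        rw [integral_add (hadd.const_mul C) (hinner'.re.const_mul 2), integral_const_mul,
          integral_const_mul, hre_zero, mul_zero, add_zero]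

end Cotlar

section HighFrequency

/-- The bounded continuous functions `x ↦ Σ_j c_j e^{i t_j x}`, with finitely many terms, all of
whose frequencies satisfy `t_j ≥ α`. -/
noncomputable def highFrequency (α : ℝ) : Submodule ℂ (ℝ →ᵇ ℂ) :=
  Submodule.span ℂ (innerProbChar '' Set.Ici α)

variable {α t : ℝ} {f g : ℝ →ᵇ ℂ}

lemma innerProbChar_mem_highFrequency (ht : α ≤ t) : innerProbChar t ∈ highFrequency α :=
  Submodule.subset_span ⟨t, ht, rfl⟩

lemma mul_mem_highFrequency (hα : 0 ≤ α) (hf : f ∈ highFrequency α) (hg : g ∈ highFrequency α) :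
    f * g ∈ highFrequency α := by
  have hle : highFrequency α * highFrequency α ≤ highFrequency α := by
    rw [highFrequency, Submodule.span_mul_span]
    refine Submodule.span_mono ?_
    rintro _ ⟨_, ⟨t, ht, rfl⟩, _, ⟨u, hu, rfl⟩, rfl⟩
    exact ⟨t + u, by simp only [Set.mem_Ici] at *; linarith, char_add_eq_mul t u⟩
  exact hle (Submodule.mul_mem_mul hf hg)

lemma pow_mem_highFrequency (hα : 0 ≤ α) (hf : f ∈ highFrequency α) {n : ℕ} (hn : n ≠ 0) :
    f ^ n ∈ highFrequency α := by
  induction n, Nat.one_le_iff_ne_zero.2 hn using Nat.le_induction with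
  | base => simpa using hf
  | succ n hn ih => exact pow_succ f n ▸ mul_mem_highFrequency hα (ih (by omega)) hf

lemma integral_eq_zero_of_mem_highFrequency {μ : Measure ℝ} [IsFiniteMeasure μ]
    (hμ : ∀ t, α ≤ t → charFun μ t = 0) (hf : f ∈ highFrequency α) : ∫ x, f x ∂μ = 0 := by
  induction hf using Submodule.span_induction with
  | mem f hf =>
    obtain ⟨t, ht, rfl⟩ := hf
    rw [← charFun_eq_integral_innerProbChar, hμ t ht]
  | zero => simp
  | add f g _ _ hf hg =>
    simp only [BoundedContinuousFunction.add_apply, integral_add (f.integrable μ) (g.integrable μ),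
      hf, hg, add_zero]
  | smul c f _ hf => simp only [BoundedContinuousFunction.smul_apply, integral_smul, hf, smul_zero]

end HighFrequency

section Fejer

/-- The Fejér-type weight `(1 - cos (b x)) / x²`. Its Fourier transform is supported in
`[-|b|, |b|]`. At `x = 0` it takes the junk value `0` instead of `b² / 2`, so that lower bounds
require `x ≠ 0`. -/
noncomputable def fejerWeight (b x : ℝ) : ℝ := (1 - Real.cos (b * x)) / x ^ 2

lemma fejerWeight_nonneg (b x : ℝ) : 0 ≤ fejerWeight b x :=
  div_nonneg (sub_nonneg.2 (Real.cos_le_one _)) (sq_nonneg x)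

@[fun_prop]
lemma measurable_fejerWeight (b : ℝ) : Measurable (fejerWeight b) := by
  unfold fejerWeight
  fun_prop

lemma fejerWeight_neg (b x : ℝ) : fejerWeight b (-x) = fejerWeight b x := by
  simp [fejerWeight]

lemma fejerWeight_le (b x : ℝ) : fejerWeight b x ≤ (b ^ 2 / 2 + 2) * (1 + x ^ 2)⁻¹ := by
  rcases eq_or_ne x 0 with rfl | hx
  · simp only [fejerWeight]
    norm_num
    positivity
  have hx2 : 0 < x ^ 2 := by positivity
  have hlower := Real.one_sub_sq_div_two_le_cos (x := b * x)
  have hupper := Real.neg_one_le_cos (b * x)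
  rw [fejerWeight, ← div_eq_mul_inv, div_le_div_iff₀ hx2 (by positivity)]
  nlinarith

lemma le_fejerWeight {b x : ℝ} (hx : x ≠ 0) (hbx : |b * x| ≤ Real.pi) :
    2 * b ^ 2 / Real.pi ^ 2 ≤ fejerWeight b x := by
  rw [fejerWeight, le_div_iff₀ (by positivity)]
  calc 2 * b ^ 2 / Real.pi ^ 2 * x ^ 2 = 2 / Real.pi ^ 2 * (b * x) ^ 2 := by ring
    _ ≤ 1 - Real.cos (b * x) := by linarith [Real.cos_le_one_sub_mul_cos_sq hbx]

lemma integrable_fejerWeight (b : ℝ) : Integrable (fejerWeight b) := by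
  refine (integrable_inv_one_add_sq.const_mul (b ^ 2 / 2 + 2)).mono' (by fun_prop)
    (.of_forall fun x => ?_)
  rw [Real.norm_of_nonneg (fejerWeight_nonneg b x)]
  exact fejerWeight_le b x

lemma integral_fejerWeight (b : ℝ) : ∫ x, fejerWeight b x = |b| * ∫ x, fejerWeight 1 x := by
  have hscale (x : ℝ) : fejerWeight b x = b ^ 2 * fejerWeight 1 (b * x) := by
    rcases eq_or_ne b 0 with rfl | hb
    · simp [fejerWeight]
    · rw [fejerWeight, fejerWeight, one_mul, mul_pow]
      field_simp
  simp_rw [hscale]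
  rw [integral_const_mul, Measure.integral_comp_mul_left, smul_eq_mul, ← mul_assoc, ← sq_abs,
    abs_inv]
  rcases eq_or_ne b 0 with rfl | hb
  · simp
  · field_simp

lemma fejerWeight_mul_cos (b t x : ℝ) : fejerWeight b x * Real.cos (t * x)
    = (fejerWeight (t + b) x + fejerWeight (t - b) x) / 2 - fejerWeight t x := by
  simp only [fejerWeight, add_mul, sub_mul, Real.cos_add, Real.cos_sub]
  ring

lemma integral_fejerWeight_mul_cos {b t : ℝ} (hb : 0 ≤ b) (ht : b ≤ t) :
    ∫ x, fejerWeight b x * Real.cos (t * x) = 0 := by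
  -- `c ↦ ∫ x, fejerWeight c x` is linear on `[0, ∞)`, so its second difference vanishes there.
  have hadd := integrable_fejerWeight (t + b)
  have hsub := integrable_fejerWeight (t - b)
  have hsum : Integrable fun x => fejerWeight (t + b) x + fejerWeight (t - b) x := hadd.add hsub
  simp_rw [fejerWeight_mul_cos]
  rw [integral_sub (hsum.div_const 2) (integrable_fejerWeight t), integral_div,
    integral_add hadd hsub, integral_fejerWeight (t + b), integral_fejerWeight (t - b),
    integral_fejerWeight t, abs_of_nonneg (add_nonneg (hb.trans ht) hb),
    abs_of_nonneg (sub_nonneg.2 ht), abs_of_nonneg (hb.trans ht)]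
  ring

lemma integral_fejerWeight_mul_sin (b t : ℝ) : ∫ x, fejerWeight b x * Real.sin (t * x) = 0 := by
  have hodd := integral_neg_eq_self (fun x => fejerWeight b x * Real.sin (t * x)) volume
  simp only [fejerWeight_neg, mul_neg, Real.sin_neg, integral_neg] at hodd
  linarith

lemma integral_fejerWeight_mul_cexp {b t : ℝ} (hb : 0 ≤ b) (ht : b ≤ t) :
    ∫ x, (fejerWeight b x : ℂ) * Complex.exp (t * x * Complex.I) = 0 := by
  have hint : Integrable fun x : ℝ => (fejerWeight b x : ℂ) * Complex.exp (t * x * Complex.I) :=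
    (integrable_fejerWeight b).ofReal.mul_bdd (c := 1) (by fun_prop) (.of_forall fun x => by
      rw [← Complex.ofReal_mul, Complex.norm_exp_ofReal_mul_I])
  apply Complex.ext
  · rw [← RCLike.re_eq_complex_re, ← integral_re hint]
    simpa [Complex.exp_re] using integral_fejerWeight_mul_cos hb ht
  · rw [← RCLike.im_eq_complex_im, ← integral_im hint]
    simpa [Complex.exp_im] using integral_fejerWeight_mul_sin b t

/-- The measure on `ℝ` whose density is the Fejér weight centred at `y`. -/
noncomputable def fejerMeasure (b y : ℝ) : Measure ℝ :=
  volume.withDensity fun x => ENNReal.ofReal (fejerWeight b (x - y))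

instance (b y : ℝ) : IsFiniteMeasure (fejerMeasure b y) :=
  isFiniteMeasure_withDensity_ofReal ((integrable_fejerWeight b).comp_sub_right y).2

lemma integral_fejerMeasure {E : Type*} [NormedAddCommGroup E] [NormedSpace ℝ E] (b y : ℝ)
    (g : ℝ → E) : ∫ x, g x ∂fejerMeasure b y = ∫ x, fejerWeight b (x - y) • g x := by
  rw [fejerMeasure, integral_withDensity_eq_integral_toReal_smul (by fun_prop)
    (.of_forall fun _ => ENNReal.ofReal_lt_top)]
  simp only [ENNReal.toReal_ofReal (fejerWeight_nonneg _ _)]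

lemma charFun_fejerMeasure {b t : ℝ} (hb : 0 ≤ b) (ht : b ≤ t) (y : ℝ) :
    charFun (fejerMeasure b y) t = 0 := by
  have htranslate (x : ℝ) : fejerWeight b x • Complex.exp (t * (x + y : ℝ) * Complex.I)
      = Complex.exp (t * y * Complex.I) *
        ((fejerWeight b x : ℂ) * Complex.exp (t * x * Complex.I)) := by
    rw [Complex.real_smul, Complex.ofReal_add, mul_add, add_mul, Complex.exp_add]
    ring
  rw [charFun_apply_real, integral_fejerMeasure, ← integral_add_right_eq_self _ y]
  simp only [add_sub_cancel_right, htranslate]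
  rw [integral_const_mul, integral_fejerWeight_mul_cexp hb ht, mul_zero]

lemma integrable_fejerWeight_smul {E : Type*} [NormedAddCommGroup E] [NormedSpace ℝ E]
    [SecondCountableTopology E] [MeasurableSpace E] [BorelSpace E] (b y : ℝ) (g : ℝ →ᵇ E) :
    Integrable fun x => fejerWeight b (x - y) • g x := by
  have := (integrable_withDensity_iff_integrable_smul' (by fun_prop)
    (.of_forall fun _ => ENNReal.ofReal_lt_top)).1 (g.integrable (fejerMeasure b y))
  simpa only [ENNReal.toReal_ofReal (fejerWeight_nonneg _ _)] using this

variable {b : ℝ} {F : ℝ →ᵇ ℝ}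

lemma intervalIntegral_le_integral_fejerMeasure (hb : 0 < b) (hbpi : b ≤ Real.pi)
    (hF : ∀ x, 0 ≤ F x) (y : ℝ) :
    ∫ x in y..(y + 1), F x ≤ Real.pi ^ 2 / (2 * b ^ 2) * ∫ x, F x ∂fejerMeasure b y := by
  have hint := integrable_fejerWeight_smul b y F
  have hlower : ∀ x ∈ Set.Ioc y (y + 1), 2 * b ^ 2 / Real.pi ^ 2 * F x
      ≤ fejerWeight b (x - y) • F x := by
    rintro x ⟨hyx, hxy⟩
    refine mul_le_mul_of_nonneg_right (le_fejerWeight (sub_pos.2 hyx).ne' ?_) (hF x)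
    rw [abs_of_nonneg (mul_nonneg hb.le (sub_pos.2 hyx).le)]
    nlinarith
  have hweighted : 2 * b ^ 2 / Real.pi ^ 2 * ∫ x in y..(y + 1), F x
      ≤ ∫ x, F x ∂fejerMeasure b y :=
    calc 2 * b ^ 2 / Real.pi ^ 2 * ∫ x in y..(y + 1), F x
        = ∫ x in Set.Ioc y (y + 1), 2 * b ^ 2 / Real.pi ^ 2 * F x := by
          rw [intervalIntegral.integral_of_le (by linarith), integral_const_mul]
      _ ≤ ∫ x in Set.Ioc y (y + 1), fejerWeight b (x - y) • F x :=
          setIntegral_mono_on (F.continuous.integrableOn_Ioc.const_mul _) hint.integrableOn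
            measurableSet_Ioc hlower
      _ ≤ ∫ x, fejerWeight b (x - y) • F x :=
          setIntegral_le_integral hint
            (.of_forall fun x => smul_nonneg (fejerWeight_nonneg _ _) (hF x))
      _ = ∫ x, F x ∂fejerMeasure b y := (integral_fejerMeasure b y F).symm
  calc ∫ x in y..(y + 1), F x
      = Real.pi ^ 2 / (2 * b ^ 2) * (2 * b ^ 2 / Real.pi ^ 2 * ∫ x in y..(y + 1), F x) := by
        field_simp
    _ ≤ _ := by gcongr

lemma inv_one_add_sq_le_three_mul {u v : ℝ} (huv : |u - v| ≤ 1) :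
    (1 + u ^ 2)⁻¹ ≤ 3 * (1 + v ^ 2)⁻¹ := by
  have hsq : (u - v) ^ 2 ≤ 1 := (sq_le_one_iff_abs_le_one _).2 huv
  rw [← div_eq_mul_inv, inv_le_comm₀ (by positivity) (by positivity), inv_div,
    div_le_iff₀ (by positivity)]
  nlinarith [sq_nonneg (v - 2 * u)]

section Decay

variable {w g : ℝ → ℝ} {a K S t y : ℝ}

lemma intervalIntegral_mul_le_of_decay (hK : 0 ≤ K)
    (hw : ∀ x ∈ Set.Icc a (a + 1), w x ≤ K * (1 + (x - y) ^ 2)⁻¹) (hg : ∀ x, 0 ≤ g x)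
    (hgint : IntervalIntegrable g volume a (a + 1))
    (hwg : IntervalIntegrable (fun x => w x * g x) volume a (a + 1))
    (hS : ∫ x in a..(a + 1), g x ≤ S) (ht : t ∈ Set.Icc a (a + 1)) :
    ∫ x in a..(a + 1), w x * g x ≤ 3 * K * S * (1 + (t - y) ^ 2)⁻¹ := by
  have hcompare : ∀ x ∈ Set.Icc a (a + 1), w x ≤ 3 * K * (1 + (t - y) ^ 2)⁻¹ := fun x hx =>
    have hdist : |x - y - (t - y)| ≤ 1 := by
      rw [abs_le]
      constructor <;> linarith [hx.1, hx.2, ht.1, ht.2]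
    calc w x ≤ K * (1 + (x - y) ^ 2)⁻¹ := hw x hx
      _ ≤ K * (3 * (1 + (t - y) ^ 2)⁻¹) := by
          gcongr
          exact inv_one_add_sq_le_three_mul hdist
      _ = 3 * K * (1 + (t - y) ^ 2)⁻¹ := by ring
  calc ∫ x in a..(a + 1), w x * g x
      ≤ ∫ x in a..(a + 1), 3 * K * (1 + (t - y) ^ 2)⁻¹ * g x :=
        intervalIntegral.integral_mono_on (by linarith) hwg (hgint.const_mul _) fun x hx =>
          mul_le_mul_of_nonneg_right (hcompare x hx) (hg x)
    _ ≤ 3 * K * (1 + (t - y) ^ 2)⁻¹ * S := by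
        rw [intervalIntegral.integral_const_mul]
        gcongr
    _ = 3 * K * S * (1 + (t - y) ^ 2)⁻¹ := by ring

lemma integral_mul_le_of_decay (hK : 0 ≤ K)
    (hw : ∀ x, w x ≤ K * (1 + (x - y) ^ 2)⁻¹) (hg : ∀ x, 0 ≤ g x)
    (hgint : ∀ x, IntervalIntegrable g volume x (x + 1)) (hwg : Integrable fun x => w x * g x)
    (hS : ∀ x, ∫ s in x..(x + 1), g s ≤ S) :
    ∫ x, w x * g x ≤ 3 * Real.pi * K * S := by
  have hv : Integrable fun x : ℝ => 3 * K * S * (1 + (x - y) ^ 2)⁻¹ :=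
    (integrable_inv_one_add_sq.comp_sub_right y).const_mul _
  have hunit (a : ℝ) : ∫ x in a..(a + 1), w x * g x
      ≤ ∫ x in a..(a + 1), 3 * K * S * (1 + (x - y) ^ 2)⁻¹ := by
    simpa using intervalIntegral.integral_mono_on (by linarith) intervalIntegrable_const
      hv.intervalIntegrable fun t ht => intervalIntegral_mul_le_of_decay hK (fun x _ => hw x) hg
        (hgint a) hwg.intervalIntegrable (hS a) ht
  calc ∫ x, w x * g x ≤ ∫ x, 3 * K * S * (1 + (x - y) ^ 2)⁻¹ :=
        hasSum_le (fun n : ℤ => hunit _) (hwg.hasSum_intervalIntegral y)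
          (hv.hasSum_intervalIntegral y)
    _ = 3 * Real.pi * K * S := by
        rw [integral_const_mul, integral_sub_right_eq_self (fun x : ℝ => (1 + x ^ 2)⁻¹) y,
          integral_univ_inv_one_add_sq]
        ring

end Decay

lemma integral_fejerMeasure_le {S : ℝ} (hF : ∀ x, 0 ≤ F x)
    (hS : ∀ x, ∫ s in x..(x + 1), F s ≤ S) (b y : ℝ) :
    ∫ x, F x ∂fejerMeasure b y ≤ 3 * Real.pi * (b ^ 2 / 2 + 2) * S := by
  rw [integral_fejerMeasure]
  exact integral_mul_le_of_decay (by positivity) (fun x => fejerWeight_le b (x - y)) hF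
    (fun x => F.continuous.intervalIntegrable _ _) (integrable_fejerWeight_smul b y F) hS

lemma bddAbove_range_intervalIntegral (F : ℝ →ᵇ ℝ) :
    BddAbove (Set.range fun x => ∫ s in x..(x + 1), F s) := by
  refine ⟨‖F‖, Set.forall_mem_range.2 fun x => ?_⟩
  have := intervalIntegral.norm_integral_le_of_norm_le_const (a := x) (b := x + 1) (f := F)
    (C := ‖F‖) fun s _ => F.norm_coe_le_norm s
  simpa using (le_abs_self _).trans this

lemma exists_intervalIntegral_le_iSup {α : ℝ} (hα : 0 < α) :
    ∃ A : ℝ, 0 < A ∧ ∀ {C : ℝ} {F G : ℝ →ᵇ ℝ}, 0 ≤ C → (∀ x, 0 ≤ F x) → (∀ x, 0 ≤ G x) →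
      (∀ μ : Measure ℝ, IsFiniteMeasure μ → (∀ t, α ≤ t → charFun μ t = 0) →
        ∫ x, G x ∂μ ≤ C * ∫ x, F x ∂μ) →
      ∀ y, ∫ x in y..(y + 1), G x ≤ A * C * ⨆ x, ∫ s in x..(x + 1), F s := by
  obtain ⟨b, hb, hbα, hbpi⟩ : ∃ b : ℝ, 0 < b ∧ b ≤ α ∧ b ≤ Real.pi :=
    ⟨min α Real.pi, lt_min hα Real.pi_pos, min_le_left _ _, min_le_right _ _⟩
  refine ⟨Real.pi ^ 2 / (2 * b ^ 2) * (3 * Real.pi * (b ^ 2 / 2 + 2)), by positivity,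
    fun {C F G} hC hF hG hFG y => ?_⟩
  calc ∫ x in y..(y + 1), G x ≤ Real.pi ^ 2 / (2 * b ^ 2) * ∫ x, G x ∂fejerMeasure b y :=
        intervalIntegral_le_integral_fejerMeasure hb hbpi hG y
    _ ≤ Real.pi ^ 2 / (2 * b ^ 2) * (C * ∫ x, F x ∂fejerMeasure b y) := by
        gcongr
        exact hFG _ inferInstance fun t ht => charFun_fejerMeasure hb.le (hbα.trans ht) y
    _ ≤ Real.pi ^ 2 / (2 * b ^ 2) * (C * (3 * Real.pi * (b ^ 2 / 2 + 2) *
          ⨆ x, ∫ s in x..(x + 1), F s)) := by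
        gcongr
        exact integral_fejerMeasure_le hF (le_ciSup (bddAbove_range_intervalIntegral F)) b y
    _ = _ := by ring

end Fejer

section SquareFunction

variable {ι X V : Type*} [Fintype ι] [TopologicalSpace X] [SeminormedAddCommGroup V]

/-- The squared square function `Σ_m ‖f_m‖²` of a finite family, as a bounded continuous
function. -/
noncomputable def normSqSum (f : ι → X →ᵇ V) : X →ᵇ ℝ := ∑ m, (f m).normComp ^ 2

lemma normSqSum_apply (f : ι → X →ᵇ V) (x : X) : normSqSum f x = ∑ m, ‖f m x‖ ^ 2 := by
  simp [normSqSum, BoundedContinuousFunction.sum_apply, BoundedContinuousFunction.pow_apply]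

lemma normSqSum_nonneg (f : ι → X →ᵇ V) (x : X) : 0 ≤ normSqSum f x := by
  rw [normSqSum_apply]
  positivity

lemma exists_integral_normSqSum_sub_pow_le {n : ℕ} (hn : n ≠ 0) :
    ∃ C : ℝ, 0 < C ∧ ∀ {ι : Type*} [Fintype ι] {p q : ι → ℝ →ᵇ ℂ} {α : ℝ} {μ : Measure ℝ}
      [IsFiniteMeasure μ], 0 ≤ α → (∀ m, p m * star (q m) ∈ highFrequency α) →
      (∀ t, α ≤ t → charFun μ t = 0) →
      ∫ x, (normSqSum (p - q) ^ n) x ∂μ ≤ C * ∫ x, (normSqSum (p + q) ^ n) x ∂μ := by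
  obtain ⟨C, hC, hbound⟩ := exists_integral_norm_sub_pow_le ℂ n
  refine ⟨C, hC, fun {ι} _ {p q α μ} _ hα hpq hμ => ?_⟩
  let p' (x : ℝ) : EuclideanSpace ℂ ι := WithLp.toLp 2 fun m => p m x
  let q' (x : ℝ) : EuclideanSpace ℂ ι := WithLp.toLp 2 fun m => q m x
  have hsub (x : ℝ) : (normSqSum (p - q) ^ n) x = (‖p' x - q' x‖ ^ 2) ^ n := by
    simp [p', q', BoundedContinuousFunction.pow_apply, normSqSum_apply, EuclideanSpace.norm_sq_eq]
  have hadd (x : ℝ) : (normSqSum (p + q) ^ n) x = (‖p' x + q' x‖ ^ 2) ^ n := by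
    simp [p', q', BoundedContinuousFunction.pow_apply, normSqSum_apply, EuclideanSpace.norm_sq_eq]
  have hinner (x : ℝ) : ((∑ m, p m * star (q m)) ^ n) x = ⟪q' x, p' x⟫_ℂ ^ n := by
    simp [p', q', BoundedContinuousFunction.pow_apply, BoundedContinuousFunction.sum_apply,
      PiLp.inner_apply]
  have hhigh : (∑ m, p m * star (q m)) ^ n ∈ highFrequency α :=
    pow_mem_highFrequency hα (Submodule.sum_mem _ fun m _ => hpq m) hn
  have hzero := integral_eq_zero_of_mem_highFrequency hμ hhigh
  have hadd_int : Integrable (fun x => (normSqSum (p + q) ^ n) x) μ :=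
    (normSqSum (p + q) ^ n).integrable μ
  have hinner_int : Integrable (fun x => ((∑ m, p m * star (q m)) ^ n) x) μ :=
    ((∑ m, p m * star (q m)) ^ n).integrable μ
  simp only [hsub, hadd, hinner] at hzero hadd_int hinner_int ⊢
  exact hbound hadd_int hinner_int hzero

end SquareFunction

lemma sgnPM_eq_one_or_eq_neg_one (pos : Bool) (t : ℝ) : sgnPM pos t = 1 ∨ sgnPM pos t = -1 := by
  unfold sgnPM
  split_ifs <;> simp

lemma monotone_sgnPM (pos : Bool) : Monotone (sgnPM pos) := by
  intro s t hst
  unfold sgnPM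
  split_ifs <;> linarith

lemma lt_of_sgnPM_eq_one_of_ne_one {pos : Bool} {s t : ℝ} (hs : sgnPM pos s = 1)
    (ht : sgnPM pos t ≠ 1) : t < s := by
  refine (monotone_sgnPM pos).reflect_lt ?_
  rw [(sgnPM_eq_one_or_eq_neg_one pos t).resolve_left ht, hs]
  norm_num

namespace TrigPoly

variable {P : TrigPoly} {α : ℝ} {S T : Set ℝ}

open scoped Classical in
/-- The part of a trigonometric polynomial with frequencies in `S`, as a bounded continuous
function. -/
noncomputable def frequencyPart (P : TrigPoly) (S : Set ℝ) : ℝ →ᵇ ℂ :=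
  ∑ k ∈ Finset.range P.N with P.Λ k ∈ S, P.c k • innerProbChar (P.Λ k)

open scoped Classical in
lemma frequencyPart_apply (P : TrigPoly) (S : Set ℝ) (x : ℝ) : P.frequencyPart S x =
    ∑ k ∈ Finset.range P.N with P.Λ k ∈ S, P.c k * Complex.exp (Complex.I * P.Λ k * x) := by
  simp only [frequencyPart, BoundedContinuousFunction.sum_apply,
    BoundedContinuousFunction.smul_apply, innerProbChar_apply, smul_eq_mul, RCLike.inner_apply,
    conj_trivial, Complex.ofReal_mul]
  refine Finset.sum_congr rfl fun k _ => ?_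
  ring_nf

lemma frequencyPart_add_compl (P : TrigPoly) (S : Set ℝ) (x : ℝ) :
    P.frequencyPart S x + P.frequencyPart Sᶜ x = P.eval x := by
  classical
  simp only [frequencyPart_apply, Set.mem_compl_iff, Finset.sum_filter_add_sum_filter_not, eval]

lemma hilb_eq_frequencyPart_sub_compl (pos : Bool) (P : TrigPoly) (x : ℝ) :
    P.hilb pos x = -Complex.I * (P.frequencyPart {t | sgnPM pos t = 1} x
      - P.frequencyPart {t | sgnPM pos t = 1}ᶜ x) := by
  classical
  simp only [frequencyPart_apply, Finset.sum_filter, ← Finset.sum_sub_distrib, Finset.mul_sum,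
    hilb, Set.mem_compl_iff, Set.mem_ofPred_eq]
  refine Finset.sum_congr rfl fun k _ => ?_
  rcases sgnPM_eq_one_or_eq_neg_one pos (P.Λ k) with h | h
  · simp [h, mul_assoc]
  · norm_num [h, mul_assoc]

lemma strictMonoOn_exponents (P : TrigPoly) : StrictMonoOn P.Λ (Set.Iio P.N) :=
  strictMonoOn_of_lt_succ Set.ordConnected_Iio fun k _ _ hk => P.mono k hk

lemma sep.lt_sub (hP : P.sep α) {j k : ℕ} (hj : j < P.N) (hk : k < P.N) (hlt : P.Λ k < P.Λ j) :
    α < P.Λ j - P.Λ k := by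
  have hkj : k + 1 ≤ j := (P.strictMonoOn_exponents.lt_iff_lt hk hj).1 hlt
  have hk' : k + 1 < P.N := hkj.trans_lt hj
  have := P.strictMonoOn_exponents.monotoneOn hk' hj hkj
  linarith [hP k hk']

lemma sep.frequencyPart_mul_star_mem_highFrequency (hP : P.sep α)
    (hST : ∀ s ∈ S, ∀ t ∈ T, t < s) :
    P.frequencyPart S * star (P.frequencyPart T) ∈ highFrequency α := by
  have hstar (t : ℝ) : star (innerProbChar t : ℝ →ᵇ ℂ) = innerProbChar (-t) :=
    (char_neg t).symm
  have hmul (s t : ℝ) : (innerProbChar s * innerProbChar t : ℝ →ᵇ ℂ) = innerProbChar (s + t) :=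
    (char_add_eq_mul s t).symm
  simp only [frequencyPart, star_sum, star_smul, hstar, Finset.sum_mul_sum, smul_mul_smul_comm,
    hmul]
  refine Submodule.sum_mem _ fun j hj => Submodule.sum_mem _ fun k hk => Submodule.smul_mem _ _ ?_
  simp only [Finset.mem_filter, Finset.mem_range] at hj hk
  have := hP.lt_sub hj.1 hk.1 (hST _ hj.2 _ hk.2)
  exact innerProbChar_mem_highFrequency (by linarith)

end TrigPoly

lemma stepanovNorm_two_mul_sqrt {F : ℝ → ℝ} (hF : ∀ x, 0 ≤ F x) (n : ℕ) :
    stepanovNorm (2 * n) (fun s => √(F s))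
      = (⨆ x : ℝ, ∫ s in x..(x + 1), F s ^ n) ^ (1 / (2 * n : ℝ)) := by
  have hpow (s : ℝ) : |√(F s)| ^ (2 * n : ℝ) = F s ^ n := by
    rw [abs_of_nonneg (Real.sqrt_nonneg _), Real.rpow_mul (Real.sqrt_nonneg _), Real.rpow_two,
      Real.sq_sqrt (hF s), Real.rpow_natCast]
  simp only [stepanovNorm, hpow]

lemma stepanovNorm_sqrt_le {F G : ℝ → ℝ} {C : ℝ} {n : ℕ} (hC : 0 ≤ C) (hF : ∀ x, 0 ≤ F x)
    (hG : ∀ x, 0 ≤ G x)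
    (hle : ∀ y, ∫ s in y..(y + 1), G s ^ n ≤ C * ⨆ x : ℝ, ∫ s in x..(x + 1), F s ^ n) :
    stepanovNorm (2 * n) (fun s => √(G s))
      ≤ C ^ (1 / (2 * n : ℝ)) * stepanovNorm (2 * n) (fun s => √(F s)) := by
  have hnonneg {f : ℝ → ℝ} (hf : ∀ x, 0 ≤ f x) (x : ℝ) : 0 ≤ ∫ s in x..(x + 1), f s ^ n :=
    intervalIntegral.integral_nonneg (by linarith) fun s _ => pow_nonneg (hf s) n
  rw [stepanovNorm_two_mul_sqrt hF, stepanovNorm_two_mul_sqrt hG,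
    ← Real.mul_rpow hC (Real.iSup_nonneg (hnonneg hF))]
  exact Real.rpow_le_rpow (Real.iSup_nonneg (hnonneg hG)) (ciSup_le hle) (by positivity)

theorem stmt_9_general (pos : Bool) {n : ℕ} (hn : n ≠ 0) {α : ℝ} (hα : 0 < α) :
    ∃ C : ℝ, 0 < C ∧ ∀ {ι : Type*} [Fintype ι] (P : ι → TrigPoly), (∀ m, (P m).sep α) →
      stepanovNorm (2 * n) (fun s => √(∑ m, ‖(P m).hilb pos s‖ ^ 2))
        ≤ C * stepanovNorm (2 * n) (fun s => √(∑ m, ‖(P m).eval s‖ ^ 2)) := by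
  obtain ⟨A, hA, hlocal⟩ := exists_intervalIntegral_le_iSup hα
  obtain ⟨B, hB, hglobal⟩ := exists_integral_normSqSum_sub_pow_le hn
  refine ⟨(A * B) ^ (1 / (2 * n : ℝ)), by positivity, fun {ι} _ P hP => ?_⟩
  let S : Set ℝ := {t | sgnPM pos t = 1}
  let p (m : ι) : ℝ →ᵇ ℂ := (P m).frequencyPart S
  let q (m : ι) : ℝ →ᵇ ℂ := (P m).frequencyPart Sᶜ
  have heval (s : ℝ) : ∑ m, ‖(P m).eval s‖ ^ 2 = normSqSum (p + q) s := by
    simp [normSqSum_apply, p, q, TrigPoly.frequencyPart_add_compl]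
  have hhilb (s : ℝ) : ∑ m, ‖(P m).hilb pos s‖ ^ 2 = normSqSum (p - q) s := by
    simp [normSqSum_apply, p, q, S, TrigPoly.hilb_eq_frequencyPart_sub_compl]
  have hpq (m : ι) : p m * star (q m) ∈ highFrequency α :=
    (hP m).frequencyPart_mul_star_mem_highFrequency fun _ hs _ ht =>
      lt_of_sgnPM_eq_one_of_ne_one hs ht
  simp only [heval, hhilb]
  exact stepanovNorm_sqrt_le (by positivity) (normSqSum_nonneg _) (normSqSum_nonneg _)
    (hlocal hB.le (fun s => pow_nonneg (normSqSum_nonneg _ s) n)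
      (fun s => pow_nonneg (normSqSum_nonneg _ s) n) fun μ _ hμ => hglobal hα.le hpq hμ)

/-- Vector-valued `S^{2^k}` bound for the modified Hilbert transforms: for every `k ≥ 1` and
`α > 0` there is a constant `C = C(k, α) > 0` such that for each finite family of `α`-separated
trigonometric polynomials `f_1, …, f_M`,
`‖(Σ_m |H_± f_m|²)^{1/2}‖_{S^{2^k}} ≤ C ‖(Σ_m |f_m|²)^{1/2}‖_{S^{2^k}}`. -/
theorem stmt_9 (pos : Bool) (k : ℕ) (hk : 1 ≤ k) (α : ℝ) (hα : 0 < α) :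
    ∃ C : ℝ, 0 < C ∧ ∀ (M : ℕ) (P : Fin M → TrigPoly), (∀ m : Fin M, (P m).sep α) →
      stepanovNorm ((2 : ℝ) ^ k)
          (fun s => Real.sqrt (∑ m : Fin M, ‖TrigPoly.hilb pos (P m) s‖ ^ 2))
        ≤ C * stepanovNorm ((2 : ℝ) ^ k)
            (fun s => Real.sqrt (∑ m : Fin M, ‖(P m).eval s‖ ^ 2)) := by
  obtain ⟨C, hC, hbound⟩ := stmt_9_general pos (n := 2 ^ (k - 1)) (by positivity) hα
  have hexp : (2 : ℝ) ^ k = 2 * (2 ^ (k - 1) : ℕ) := by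
    rw [Nat.cast_pow, Nat.cast_ofNat, mul_pow_sub_one (by omega)]
  exact ⟨C, hC, fun M P hP => hexp ▸ hbound P hP⟩
end
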